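/- Let m ≥ 3 and let A ≥ 0, B be integers with 14A + 7B - B² ≥ 0 and (A,B) ≢ (0,0) mod 7. Then there exist integers x₁, x₂, x₃, x₄ with P_m(x₁) + P_m(x₂) + 2P_m(x₃) + 3P_m(x₄) = A(m-2) + B. -/

import Mathlib

/-- The generalized `m`-gonal number `P_m(x) = ((m-2)x² - (m-4)x)/2`. -/
def polygonal (m x : ℤ) : ℤ := ((m - 2) * x ^ 2 - (m - 4) * x) / 2

/-!
The equation follows, for every `m` at once, from the two equations
`x₁ + x₂ + 2x₃ + 3x₄ = B` and `x₁² + x₂² + 2x₃² + 3x₄² = 2A + B`. Putting `xᵢ = x₄ ± vᵢ` and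
completing the square turns them into the representation of `n = (14A + 7B - B²) / 2` by a ternary
form `dualForm`; the congruence modulo 7 needed to recover `x₄` from `v` holds for one choice of
sign. Up to scaling, `dualForm` is the dual of `baseForm` at the prime 7, so it is enough that
`baseForm` represents `n / 7` if `7 ∣ B`, and `7n` otherwise.

By reduction theory, every positive form of half-discriminant 21 that does not represent 7 is
equivalent to `baseForm`. As in the proof of the three-squares theorem, Dirichlet's theorem on
primes in arithmetic progressions and quadratic reciprocity produce such a form having the
prescribed integer as a coefficient.
-/

open Matrix
open scoped NumberTheorySymbols

theorem exists_abs_add_two_mul_le (n : ℤ) {m : ℤ} (hm : 0 < m) :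
    ∃ k : ℤ, |n + 2 * m * k| ≤ m := by
  refine ⟨-((n + m) / (2 * m)), ?_⟩
  have hdiv := Int.emod_add_mul_ediv (n + m) (2 * m)
  have hnonneg := Int.emod_nonneg (n + m) (show 2 * m ≠ 0 by omega)
  have hlt := Int.emod_lt_of_pos (n + m) (show 0 < 2 * m by omega)
  rw [abs_le]
  constructor <;> linarith

theorem dvd_and_dvd_of_dvd_sq_add_sq {p : ℕ} (hp : p.Prime) (hp4 : p % 4 = 3) {x y : ℤ}
    (h : (p : ℤ) ∣ x ^ 2 + y ^ 2) : (p : ℤ) ∣ x ∧ (p : ℤ) ∣ y := by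
  have : Fact p.Prime := ⟨hp⟩
  simp only [← ZMod.intCast_zmod_eq_zero_iff_dvd] at *
  push_cast at h
  constructor <;> by_contra hne
  · exact ZMod.mod_four_ne_three_of_sq_eq_neg_sq hne (eq_neg_of_add_eq_zero_left h) hp4
  · exact ZMod.mod_four_ne_three_of_sq_eq_neg_sq' hne (eq_neg_of_add_eq_zero_left h) hp4

theorem seven_dvd_and_dvd_of_dvd_sq_add_sq {x y : ℤ} (h : 7 ∣ x ^ 2 + y ^ 2) : 7 ∣ x ∧ 7 ∣ y :=
  dvd_and_dvd_of_dvd_sq_add_sq (p := 7) (by norm_num) (by norm_num) h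

theorem emod_four_eq_one_of_twelve_mul_eq {n σ β : ℤ} (h : 12 * n = σ ^ 2 * β + 7) :
    β % 4 = 1 := by
  have hσ : Odd σ := by
    by_contra hσ
    obtain ⟨k, rfl⟩ := even_iff_two_dvd.1 (Int.not_odd_iff_even.1 hσ)
    have : 2 * (6 * n - 2 * k ^ 2 * β) = 7 := by linear_combination h
    omega
  obtain ⟨k, hk⟩ := hσ
  have : 4 * (3 * n - (k ^ 2 + k) * β - 2) = β - 1 := by
    rw [hk] at h
    linear_combination h
  omega

theorem odd_of_modEq_sq {ε w : ℕ} (hε : ε ≡ w ^ 2 [MOD 28]) (hw : w.Coprime 14) : Odd ε := by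
  have hw2 : Odd (w ^ 2) :=
    (Nat.coprime_two_right.1 (hw.coprime_dvd_right (by norm_num))).pow
  rw [Nat.odd_iff] at hw2 ⊢
  have : ε % 28 = w ^ 2 % 28 := hε
  omega

theorem jacobiSym_neg_seven_eq_one {ε w : ℕ} (hε : ε ≡ w ^ 2 [MOD 28]) (hw : w.Coprime 14) :
    J(-7 | ε) = 1 := by
  have hperiod : J(-7 | ε) = J(-7 | w ^ 2) := by
    rw [jacobiSym.mod_right _ (odd_of_modEq_sq hε hw),
      jacobiSym.mod_right _ (odd_of_modEq_sq (ε := w ^ 2) rfl hw)]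
    exact congrArg (jacobiSym (-7)) hε
  rw [hperiod, jacobiSym.pow_right]
  refine jacobiSym.sq_one ?_
  rw [Int.neg_gcd]
  exact (hw.coprime_dvd_right (by norm_num : 7 ∣ 14)).symm

/-- The hypothesis read modulo `ε` gives `J(β | ε) = J(-7 | ε) = 1`, and quadratic reciprocity then
makes `-ε` a square modulo `β`. -/
theorem exists_mul_eq_sq_add {K σ : ℤ} {ε β w : ℕ} (hβ : β.Prime)
    (h : 12 * K * ε = σ ^ 2 * β + 7) (hε : ε ≡ w ^ 2 [MOD 28]) (hw : w.Coprime 14) :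
    ∃ α τ : ℤ, α * β = τ ^ 2 + ε := by
  have : Fact β.Prime := ⟨hβ⟩
  have hβ4 : β % 4 = 1 := by
    exact_mod_cast emod_four_eq_one_of_twelve_mul_eq (n := K * ε) (β := β)
      (by rw [← h, mul_assoc])
  have hε_odd := odd_of_modEq_sq hε hw
  have hβ_odd : Odd β := Nat.odd_iff.2 (by omega)
  have hσβ : J(σ ^ 2 * β | ε) = 1 := by
    rw [← jacobiSym_neg_seven_eq_one hε hw]
    refine jacobiSym.mod_left' (Int.ModEq.symm (Int.modEq_iff_dvd.2 ⟨12 * K, ?_⟩))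
    linear_combination -h
  have hβε : J(β | ε) = 1 := by
    rw [jacobiSym.mul_left, jacobiSym.pow_left] at hσβ
    rcases Int.eq_one_or_neg_one_of_mul_eq_one' hσβ with ⟨-, h⟩ | ⟨h, -⟩
    · exact h
    · linarith [sq_nonneg J(σ | ε)]
  have hεβ : legendreSym β (-ε) = 1 := by
    rw [jacobiSym.legendreSym.to_jacobiSym, jacobiSym.neg _ hβ_odd, ZMod.χ₄_nat_one_mod_four hβ4,
      one_mul, ← jacobiSym.quadratic_reciprocity_one_mod_four hβ4 hε_odd, hβε]
  have hne : ((-ε : ℤ) : ZMod β) ≠ 0 := fun h0 => by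
    simp [(legendreSym.eq_zero_iff β (-ε)).2 h0] at hεβ
  obtain ⟨x, hx⟩ := (legendreSym.eq_one_iff β hne).1 hεβ
  obtain ⟨τ, rfl⟩ := ZMod.intCast_surjective x
  obtain ⟨α, hα⟩ : (β : ℤ) ∣ τ ^ 2 + ε := by
    rw [← ZMod.intCast_zmod_eq_zero_iff_dvd]
    push_cast at hx ⊢
    linear_combination -hx
  exact ⟨α, τ, by rw [hα, mul_comm]⟩

/-- The integral ternary quadratic form
`a x² + b y² + c z² + r y z + s x z + t x y`. The cross coefficients may be odd. -/
structure TernaryForm where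
  (a b c r s t : ℤ)

namespace TernaryForm

variable {F G H : TernaryForm}

/-- The value of a ternary form at an integral vector. -/
def eval (F : TernaryForm) (v : Fin 3 → ℤ) : ℤ :=
  F.a * v 0 ^ 2 + F.b * v 1 ^ 2 + F.c * v 2 ^ 2 +
    F.r * v 1 * v 2 + F.s * v 0 * v 2 + F.t * v 0 * v 1

/-- The Gram matrix of the polar form of `F`, so that `v ⬝ᵥ F.gram *ᵥ v` is twice `F.eval v`. -/
def gram (F : TernaryForm) : Matrix (Fin 3) (Fin 3) ℤ :=
  !![2 * F.a, F.t, F.s; F.t, 2 * F.b, F.r; F.s, F.r, 2 * F.c]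

/-- The half-discriminant of `F`, that is, half the determinant of its Gram matrix. -/
def disc (F : TernaryForm) : ℤ :=
  4 * F.a * F.b * F.c + F.r * F.s * F.t - F.a * F.r ^ 2 - F.b * F.s ^ 2 - F.c * F.t ^ 2

/-- The Gram minor with rows `x, y` and columns `x, y`. -/
def minorXY (F : TernaryForm) : ℤ := 4 * F.a * F.b - F.t ^ 2

/-- The Gram minor with rows `x, z` and columns `x, z`. -/
def minorXZ (F : TernaryForm) : ℤ := 4 * F.a * F.c - F.s ^ 2

/-- The Gram minor with rows `x, y` and columns `x, z`. -/
def minorMixed (F : TernaryForm) : ℤ := 2 * F.a * F.r - F.s * F.t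

/-- Positive definiteness over `ℤ`. -/
def PosDef (F : TernaryForm) : Prop := ∀ v, v ≠ 0 → 0 < F.eval v

/-- The integer `n` is a value of the form `F`; the zero vector is allowed. -/
def Represents (F : TernaryForm) (n : ℤ) : Prop := ∃ v, F.eval v = n

/-- Proper equivalence: the two forms differ by a substitution of determinant `1`, expressed on
Gram matrices. -/
def Equivalent (F G : TernaryForm) : Prop :=
  ∃ U : Matrix (Fin 3) (Fin 3) ℤ, U.det = 1 ∧ G.gram = Uᵀ * F.gram * U

theorem det_gram (F : TernaryForm) : F.gram.det = 2 * F.disc := by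
  simp only [gram, disc, det_fin_three, of_apply, cons_val', cons_val_zero, cons_val_fin_one,
    cons_val_one, cons_val]
  ring

theorem dotProduct_gram_mulVec (F : TernaryForm) (v : Fin 3 → ℤ) :
    v ⬝ᵥ F.gram *ᵥ v = 2 * F.eval v := by
  simp only [gram, eval, mulVec, dotProduct, Fin.sum_univ_three, of_apply, cons_val',
    cons_val_zero, cons_val_fin_one, cons_val_one, cons_val]
  ring

theorem minorXY_mul_minorXZ (F : TernaryForm) :
    F.minorXY * F.minorXZ = 4 * F.a * F.disc + F.minorMixed ^ 2 := by
  simp only [minorXY, minorXZ, minorMixed, disc]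
  ring

namespace Equivalent

protected theorem refl (F : TernaryForm) : Equivalent F F := ⟨1, by simp⟩

protected theorem symm (h : Equivalent F G) : Equivalent G F := by
  obtain ⟨U, hdet, hU⟩ := h
  have hmul : U * U⁻¹ = 1 := mul_nonsing_inv U (by simp [hdet])
  refine ⟨U⁻¹, by simp [det_nonsing_inv, hdet], ?_⟩
  rw [hU, Matrix.mul_assoc, Matrix.mul_assoc, hmul, Matrix.mul_one, ← Matrix.mul_assoc,
    ← transpose_mul, hmul, transpose_one, Matrix.one_mul]

protected theorem trans (hFG : Equivalent F G) (hGH : Equivalent G H) : Equivalent F H := by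
  obtain ⟨U, hdetU, hU⟩ := hFG
  obtain ⟨V, hdetV, hV⟩ := hGH
  refine ⟨U * V, by rw [det_mul, hdetU, hdetV, mul_one], ?_⟩
  rw [hV, hU, transpose_mul]
  simp only [Matrix.mul_assoc]

theorem disc_eq (h : Equivalent F G) : G.disc = F.disc := by
  obtain ⟨U, hdet, hU⟩ := h
  have hgram := congrArg Matrix.det hU
  rw [det_mul, det_mul, det_transpose, hdet, one_mul, mul_one, det_gram, det_gram] at hgram
  linarith

theorem exists_eval_eq (h : Equivalent F G) :
    ∃ U : Matrix (Fin 3) (Fin 3) ℤ, U.det = 1 ∧ ∀ v, G.eval v = F.eval (U *ᵥ v) := by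
  obtain ⟨U, hdet, hU⟩ := h
  refine ⟨U, hdet, fun v => mul_left_cancel₀ (two_ne_zero (α := ℤ)) ?_⟩
  rw [← dotProduct_gram_mulVec, ← dotProduct_gram_mulVec, hU, ← mulVec_mulVec, ← mulVec_mulVec,
    dotProduct_transpose_mulVec, dotProduct_comm]

theorem posDef (h : Equivalent F G) (hF : F.PosDef) : G.PosDef := by
  obtain ⟨U, hdet, hU⟩ := h.exists_eval_eq
  intro v hv
  rw [hU]
  exact hF _ fun hUv => hv (eq_zero_of_mulVec_eq_zero (by simp [hdet]) hUv)

theorem represents (h : Equivalent F G) {n : ℤ} (hn : G.Represents n) : F.Represents n := by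
  obtain ⟨U, -, hU⟩ := h.exists_eval_eq
  obtain ⟨v, hv⟩ := hn
  exact ⟨_, (hU v).symm.trans hv⟩

end Equivalent

theorem PosDef.a_pos (hF : F.PosDef) : 0 < F.a := by
  simpa [eval] using hF ![1, 0, 0] (by simp)

theorem PosDef.minorXY_pos (hF : F.PosDef) : 0 < F.minorXY := by
  have ha := hF.a_pos
  have hval : 0 < F.a * F.minorXY := by
    convert hF ![-F.t, 2 * F.a, 0] (by simp [ha.ne']) using 1
    simp only [eval, minorXY, cons_val_zero, cons_val_one, cons_val]
    ring
  exact pos_of_mul_pos_right hval ha.le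

/-- Sylvester's criterion, by completing the square twice. -/
theorem posDef_of_minors_pos (ha : 0 < F.a) (hXY : 0 < F.minorXY) (hdisc : 0 < F.disc) :
    F.PosDef := by
  intro v hv
  have hsquares : 4 * F.a * F.minorXY * F.eval v =
      F.minorXY * (2 * F.a * v 0 + F.t * v 1 + F.s * v 2) ^ 2 +
        (F.minorXY * v 1 + F.minorMixed * v 2) ^ 2 + 4 * F.a * F.disc * v 2 ^ 2 := by
    simp only [minorXY, minorMixed, disc, eval]
    ring
  refine pos_of_mul_pos_right (a := 4 * F.a * F.minorXY) ?_ (by positivity)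
  rw [hsquares]
  by_contra! hle
  have h₀ : 0 ≤ F.minorXY * (2 * F.a * v 0 + F.t * v 1 + F.s * v 2) ^ 2 := by positivity
  have h₁ : 0 ≤ (F.minorXY * v 1 + F.minorMixed * v 2) ^ 2 := by positivity
  have h₂ : 0 ≤ 4 * F.a * F.disc * v 2 ^ 2 := by positivity
  have hv₂ : v 2 = 0 := by
    have : 4 * F.a * F.disc * v 2 ^ 2 = 0 := by linarith
    simpa [ha.ne', hdisc.ne'] using this
  have hv₁ : v 1 = 0 := by
    have : (F.minorXY * v 1 + F.minorMixed * v 2) ^ 2 = 0 := by linarith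
    simpa [hv₂, hXY.ne'] using this
  have hv₀ : v 0 = 0 := by
    have : F.minorXY * (2 * F.a * v 0 + F.t * v 1 + F.s * v 2) ^ 2 = 0 := by linarith
    simpa [hv₁, hv₂, hXY.ne', ha.ne'] using this
  exact hv (by ext i; fin_cases i <;> assumption)

/-- The form obtained from `F` by `x ↦ x + k y + l z`, `y ↦ y + m z`. -/
def shear (F : TernaryForm) (k l m : ℤ) : TernaryForm where
  a := F.a
  b := F.a * k ^ 2 + F.t * k + F.b
  c := F.a * l ^ 2 + F.b * m ^ 2 + F.c + F.r * m + F.s * l + F.t * l * m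
  r := 2 * F.a * k * l + 2 * F.b * m + F.r + F.t * l + F.s * k + F.t * k * m
  s := F.s + F.t * m + 2 * F.a * l
  t := F.t + 2 * F.a * k

/-- The form obtained from `F` by `x ↦ y`, `y ↦ -x`. -/
def rotateXY (F : TernaryForm) : TernaryForm := ⟨F.b, F.a, F.c, F.s, -F.r, -F.t⟩

/-- The form obtained from `F` by `y ↦ z`, `z ↦ -y`. -/
def rotateYZ (F : TernaryForm) : TernaryForm := ⟨F.a, F.c, F.b, -F.r, F.t, -F.s⟩

theorem equivalent_shear (F : TernaryForm) (k l m : ℤ) : F.Equivalent (F.shear k l m) := by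
  refine ⟨!![1, k, l; 0, 1, m; 0, 0, 1], by simp [det_fin_three], ?_⟩
  ext i j
  fin_cases i <;> fin_cases j <;>
    simp [gram, shear, Matrix.mul_apply, Fin.sum_univ_three] <;> ring

theorem equivalent_rotateXY (F : TernaryForm) : F.Equivalent F.rotateXY := by
  refine ⟨!![0, 1, 0; -1, 0, 0; 0, 0, 1], by simp [det_fin_three], ?_⟩
  ext i j
  fin_cases i <;> fin_cases j <;>
    simp [gram, rotateXY, Matrix.mul_apply, Fin.sum_univ_three]

theorem equivalent_rotateYZ (F : TernaryForm) : F.Equivalent F.rotateYZ := by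
  refine ⟨!![1, 0, 0; 0, 0, 1; 0, -1, 0], by simp [det_fin_three], ?_⟩
  ext i j
  fin_cases i <;> fin_cases j <;>
    simp [gram, rotateYZ, Matrix.mul_apply, Fin.sum_univ_three]

theorem minorXY_shear (F : TernaryForm) (k l m : ℤ) : (F.shear k l m).minorXY = F.minorXY := by
  simp only [minorXY, shear]
  ring

theorem minorMixed_shear (F : TernaryForm) (k l m : ℤ) :
    (F.shear k l m).minorMixed = F.minorMixed + F.minorXY * m := by
  simp only [minorMixed, minorXY, shear]
  ring

theorem minorXY_rotateYZ (F : TernaryForm) : F.rotateYZ.minorXY = F.minorXZ := by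
  simp only [minorXY, minorXZ, rotateYZ]
  ring

/-- The inequalities obtained by minimizing first `a`, then `minorXY`, within a class and
size-reducing the off-diagonal terms. -/
structure IsReduced (F : TernaryForm) : Prop where
  a_le_b : F.a ≤ F.b
  abs_t_le : |F.t| ≤ F.a
  abs_s_le : |F.s| ≤ F.a
  abs_two_mul_minorMixed_le : |2 * F.minorMixed| ≤ F.minorXY
  minorXY_le_minorXZ : F.minorXY ≤ F.minorXZ

theorem exists_equivalent_minimal (hF : F.PosDef) :
    ∃ G, F.Equivalent G ∧ (∀ H, F.Equivalent H → G.a ≤ H.a) ∧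
      ∀ H, F.Equivalent H → H.a = G.a → G.minorXY ≤ H.minorXY := by
  obtain ⟨M, hFM, hM⟩ := exists_minimalFor_of_wellFoundedLT F.Equivalent
    (fun G => G.a.toNat) ⟨F, .refl F⟩
  obtain ⟨G, ⟨hFG, hGM⟩, hG⟩ := exists_minimalFor_of_wellFoundedLT
    (fun G => F.Equivalent G ∧ G.a = M.a) (fun G => G.minorXY.toNat) ⟨M, hFM, rfl⟩
  refine ⟨G, hFG, fun H hFH => ?_, fun H hFH hHG => ?_⟩
  · have hH := (hFH.posDef hF).a_pos
    have hle : H.a.toNat ≤ M.a.toNat → M.a.toNat ≤ H.a.toNat := hM hFH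
    omega
  · have hH := (hFH.posDef hF).minorXY_pos
    have hle : H.minorXY.toNat ≤ G.minorXY.toNat → G.minorXY.toNat ≤ H.minorXY.toNat :=
      hG ⟨hFH, hHG.trans hGM⟩
    omega

theorem exists_equivalent_isReduced (hF : F.PosDef) : ∃ G, F.Equivalent G ∧ G.IsReduced := by
  obtain ⟨M, hFM, ha_min, hXY_min⟩ := exists_equivalent_minimal hF
  have hM := hFM.posDef hF
  obtain ⟨m, hm⟩ := exists_abs_add_two_mul_le (2 * M.minorMixed) hM.minorXY_pos
  obtain ⟨k, hk⟩ := exists_abs_add_two_mul_le M.t hM.a_pos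
  obtain ⟨l, hl⟩ := exists_abs_add_two_mul_le (M.s + M.t * m) hM.a_pos
  have hFG : F.Equivalent (M.shear k l m) := hFM.trans (M.equivalent_shear k l m)
  refine ⟨M.shear k l m, hFG, ?_, hk, hl, ?_, ?_⟩
  · exact ha_min _ (hFG.trans (equivalent_rotateXY _))
  · rw [minorMixed_shear, minorXY_shear]
    convert hm using 2
    ring
  · rw [minorXY_shear, ← minorXY_rotateYZ]
    exact hXY_min _ (hFG.trans (equivalent_rotateYZ _)) rfl

namespace IsReduced

theorem three_mul_a_sq_le (hF : F.IsReduced) : 3 * F.a ^ 2 ≤ F.minorXY := by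
  have ha : 0 ≤ F.a := (abs_nonneg _).trans hF.abs_t_le
  have ht : F.t ^ 2 ≤ F.a ^ 2 := sq_le_sq' (abs_le.1 hF.abs_t_le).1 (abs_le.1 hF.abs_t_le).2
  have hab : F.a * F.a ≤ F.a * F.b := mul_le_mul_of_nonneg_left hF.a_le_b ha
  rw [minorXY]
  linarith

theorem three_mul_minorXY_sq_le (hF : F.IsReduced) :
    3 * F.minorXY ^ 2 ≤ 16 * F.a * F.disc := by
  have hXY : 0 ≤ F.minorXY := (abs_nonneg _).trans hF.abs_two_mul_minorMixed_le
  have hmixed : (2 * F.minorMixed) ^ 2 ≤ F.minorXY ^ 2 :=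
    sq_le_sq' (abs_le.1 hF.abs_two_mul_minorMixed_le).1 (abs_le.1 hF.abs_two_mul_minorMixed_le).2
  have hmul : F.minorXY * F.minorXY ≤ F.minorXY * F.minorXZ :=
    mul_le_mul_of_nonneg_left hF.minorXY_le_minorXZ hXY
  linarith [F.minorXY_mul_minorXZ]

theorem twentySeven_mul_a_pow_three_le (hF : F.IsReduced) (ha : 0 < F.a) :
    27 * F.a ^ 3 ≤ 16 * F.disc := by
  have hsq : (3 * F.a ^ 2) ^ 2 ≤ F.minorXY ^ 2 :=
    pow_le_pow_left₀ (by positivity) hF.three_mul_a_sq_le 2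
  refine le_of_mul_le_mul_left ?_ ha
  linarith [hF.three_mul_minorXY_sq_le]

end IsReduced

/-- The form `x² + 2y² + 3z² - yz + xz`, of half-discriminant 21. Its value at `(x, y, z)` is half
the value of `x₁² + x₂² + 2x₃² + 3x₄²` at the vector `(x + y + z, y - x, z - y, -z)` of the
hyperplane `x₁ + x₂ + 2x₃ + 3x₄ = 0`. -/
def baseForm : TernaryForm := ⟨1, 2, 3, -1, 1, 0⟩

namespace IsReduced

theorem a_eq_one_of_disc_eq (hF : F.IsReduced) (ha : 0 < F.a) (hdisc : F.disc = 21) :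
    F.a = 1 := by
  have ha_cubed := hF.twentySeven_mul_a_pow_three_le ha
  have hXY_sq := hF.three_mul_minorXY_sq_le
  have hXY_ge := hF.three_mul_a_sq_le
  have hab := hF.a_le_b
  have ht := abs_le.1 hF.abs_t_le
  obtain ⟨a, b, c, r, s, t⟩ := F
  simp only [minorXY, disc] at *
  have ha_le : a ≤ 2 := by
    by_contra! h
    have := pow_le_pow_left₀ (by norm_num) (show 3 ≤ a by omega) 3
    linarith
  by_contra ha_ne
  obtain rfl : a = 2 := by omega
  have hXY_le : 4 * 2 * b - t ^ 2 ≤ 14 := by nlinarith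
  obtain ⟨rfl, rfl | rfl⟩ : b = 2 ∧ (t = 2 ∨ t = -2) := by
    have hb : b = 2 := by nlinarith
    refine ⟨hb, ?_⟩
    obtain ⟨ht₁, ht₂⟩ := ht
    interval_cases t <;> omega
  -- Every term of the half-discriminant is now even.
  all_goals omega

theorem coeffs_of_disc_eq (hF : F.IsReduced) (ha : 0 < F.a) (hdisc : F.disc = 21) :
    F.a = 1 ∧ ((F.b = 1 ∧ F.c = 7 ∧ F.r = 0 ∧ F.s = 0 ∧ (F.t = 1 ∨ F.t = -1)) ∨
      (F.b = 2 ∧ F.c = 3 ∧ F.r = 0 ∧ F.s = 0 ∧ (F.t = 1 ∨ F.t = -1)) ∨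
      (F.b = 2 ∧ F.c = 3 ∧ (F.r = 1 ∨ F.r = -1) ∧ (F.s = 1 ∨ F.s = -1) ∧ F.t = 0)) := by
  have ha_eq := hF.a_eq_one_of_disc_eq ha hdisc
  have hXY_sq := hF.three_mul_minorXY_sq_le
  obtain ⟨hab, ht, hs, hmixed, hXZ⟩ := hF
  obtain ⟨a, b, c, r, s, t⟩ := F
  obtain rfl : a = 1 := ha_eq
  simp only [minorXY, minorXZ, minorMixed, disc, abs_le, true_and] at *
  have hXY : 4 * b - t ^ 2 ≤ 10 := by nlinarith
  clear hXY_sq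
  obtain ⟨ht₁, ht₂⟩ := ht
  obtain ⟨hs₁, hs₂⟩ := hs
  have hb : b ≤ 2 := by nlinarith
  have hr : -3 ≤ r ∧ r ≤ 3 := by constructor <;> nlinarith
  obtain ⟨hr₁, hr₂⟩ := hr
  interval_cases b <;> interval_cases t <;> interval_cases s <;> interval_cases r <;> omega

end IsReduced

theorem baseForm_represents_of_disc_eq (hF : F.PosDef) (hdisc : F.disc = 21)
    (h7 : ¬ F.Represents 7) {n : ℤ} (hn : F.Represents n) : baseForm.Represents n := by
  obtain ⟨G, hFG, hG⟩ := exists_equivalent_isReduced hF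
  have hG7 : ¬ G.Represents 7 := fun h => h7 (hFG.represents h)
  obtain ⟨v, hv⟩ := hFG.symm.represents hn
  have hcoeffs := hG.coeffs_of_disc_eq (hFG.posDef hF).a_pos (hFG.disc_eq.trans hdisc)
  obtain ⟨a, b, c, r, s, t⟩ := G
  obtain ⟨rfl, ⟨rfl, rfl, rfl, rfl, ht⟩ | ⟨rfl, rfl, rfl, rfl, -⟩ | ⟨rfl, rfl, hr, hs, rfl⟩⟩ :=
    hcoeffs
  · exact absurd ⟨![2, t, 0], by rcases ht with rfl | rfl <;> simp [eval]⟩ hG7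
  · exact absurd ⟨![2, 0, 1], by simp [eval]⟩ hG7
  · refine ⟨![s * v 0, -r * v 1, v 2], ?_⟩
    rw [← hv]
    rcases hr with rfl | rfl <;> rcases hs with rfl | rfl <;> simp [eval, baseForm]

/-- A form representing `K`; its half-discriminant is `21` when `12Kε = σ²β + 7` and
`αβ = τ² + ε`. -/
def primeForm (K σ α β τ : ℤ) : TernaryForm := ⟨3 * α, 3 * β, K, 0, σ, 6 * τ⟩

theorem primeForm_represents (K σ α β τ : ℤ) : (primeForm K σ α β τ).Represents K :=
  ⟨![0, 0, 1], by simp [eval, primeForm]⟩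

section PrimeForm
variable {K σ α β τ ε w : ℤ}

theorem disc_primeForm (h₁ : 12 * K * ε = σ ^ 2 * β + 7) (h₂ : α * β = τ ^ 2 + ε) :
    (primeForm K σ α β τ).disc = 21 := by
  simp only [disc, primeForm]
  linear_combination 36 * K * h₂ + 3 * h₁

theorem posDef_primeForm (h₁ : 12 * K * ε = σ ^ 2 * β + 7) (h₂ : α * β = τ ^ 2 + ε)
    (hε : 0 < ε) (hβ : 0 < β) : (primeForm K σ α β τ).PosDef := by
  have hα : 0 < α := by
    refine pos_of_mul_pos_left (b := β) ?_ hβ.le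
    rw [h₂]
    positivity
  refine posDef_of_minors_pos ?_ ?_ ?_
  · simpa [primeForm] using hα
  · simp only [primeForm, minorXY]
    linarith
  · simp [disc_primeForm h₁ h₂]

theorem mul_eval_primeForm (h₁ : 12 * K * ε = σ ^ 2 * β + 7) (h₂ : α * β = τ ^ 2 + ε)
    (v : Fin 3 → ℤ) :
    12 * ε * β * (primeForm K σ α β τ).eval v =
      ε * (6 * (β * v 1 + τ * v 0)) ^ 2 + (6 * ε * v 0 + σ * β * v 2) ^ 2 + 7 * β * v 2 ^ 2 := by
  simp only [eval, primeForm]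
  linear_combination 36 * ε * v 0 ^ 2 * h₂ + β * v 2 ^ 2 * h₁

theorem primeForm_not_represents_seven (h₁ : 12 * K * ε = σ ^ 2 * β + 7)
    (h₂ : α * β = τ ^ 2 + ε) (hβ : ¬ 7 ∣ β) (hε : 7 ∣ ε - w ^ 2) (hw : ¬ 7 ∣ w) :
    ¬ (primeForm K σ α β τ).Represents 7 := by
  rintro ⟨v, hv⟩
  have hsum := mul_eval_primeForm h₁ h₂ v
  rw [hv] at hsum
  have h7 : Prime (7 : ℤ) := by norm_num
  obtain ⟨j, hj⟩ := hε
  generalize 6 * (β * v 1 + τ * v 0) = X at hsum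
  generalize 6 * ε * v 0 + σ * β * v 2 = Y at hsum
  obtain ⟨hX, ⟨Y', rfl⟩⟩ := seven_dvd_and_dvd_of_dvd_sq_add_sq (x := w * X) (y := Y)
    ⟨12 * ε * β - β * v 2 ^ 2 - j * X ^ 2, by linear_combination -hsum - X ^ 2 * hj⟩
  obtain ⟨X', rfl⟩ := (h7.dvd_or_dvd hX).resolve_left hw
  have hβz : 7 ∣ β * (12 * ε - v 2 ^ 2) := ⟨ε * X' ^ 2 + Y' ^ 2, by linarith⟩
  obtain ⟨i, hi⟩ := (h7.dvd_or_dvd hβz).resolve_left hβ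
  -- Modulo 7 this reads `v 2 ^ 2 + (3 * w) ^ 2 = 0`, as `12 = -3 ^ 2`.
  obtain ⟨-, h3w⟩ := seven_dvd_and_dvd_of_dvd_sq_add_sq (x := v 2) (y := 3 * w)
    ⟨12 * j + 3 * w ^ 2 - i, by linear_combination -hi + 12 * hj⟩
  omega

end PrimeForm

theorem baseForm_represents_of_coprime {K N b σ w : ℕ} (hK : 0 < K)
    (h : 12 * K * w ^ 2 = σ ^ 2 * b + 7) (hN : 336 * K = σ ^ 2 * N) (hb : b.Coprime N)
    (hw : w.Coprime 14) : baseForm.Represents K := by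
  have hN0 : N ≠ 0 := by
    rintro rfl
    omega
  obtain ⟨β, hbβ, hβ, hmod⟩ := Nat.forall_exists_prime_gt_and_modEq b hN0 hb
  obtain ⟨j, hj⟩ := (Nat.modEq_iff_dvd' hbβ.le).1 hmod.symm
  obtain rfl : β = b + N * j := by omega
  have hε : w ^ 2 + 28 * j ≡ w ^ 2 [MOD 28] := by simp [Nat.ModEq]
  have h₁ : 12 * (K : ℤ) * (w ^ 2 + 28 * j : ℕ) = (σ : ℤ) ^ 2 * (b + N * j : ℕ) + 7 := by
    zify at h hN
    push_cast
    linear_combination h + j * hN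
  obtain ⟨α, τ, h₂⟩ := exists_mul_eq_sq_add hβ h₁ hε hw
  have hβ7 : ¬ (7 : ℤ) ∣ (b + N * j : ℕ) := by
    intro hdvd
    have heq := (Nat.prime_dvd_prime_iff_eq (by norm_num) hβ).1 (Int.natCast_dvd_natCast.1 hdvd)
    have hβ4 := emod_four_eq_one_of_twelve_mul_eq (by rw [← h₁, mul_assoc])
    norm_num [← heq] at hβ4
  have hw0 : 0 < w := Nat.pos_of_ne_zero (by rintro rfl; norm_num at hw)
  have hw7 : ¬ (7 : ℤ) ∣ w := by
    intro hdvd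
    have := Nat.Coprime.eq_one_of_dvd
      (hw.coprime_dvd_right (by norm_num : 7 ∣ 14)).symm (Int.natCast_dvd_natCast.1 hdvd)
    omega
  exact baseForm_represents_of_disc_eq
    (posDef_primeForm h₁ h₂ (by positivity) (by exact_mod_cast hβ.pos))
    (disc_primeForm h₁ h₂)
    (primeForm_not_represents_seven h₁ h₂ hβ7 ⟨4 * j, by push_cast; ring⟩ hw7)
    (primeForm_represents K σ α _ τ)

theorem baseForm_represents_of_not_seven_dvd {K : ℕ} (hK : 0 < K) (h7 : ¬ 7 ∣ K) :
    baseForm.Represents K := by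
  obtain ⟨b, hb⟩ : ∃ b, 12 * K = b + 7 := ⟨12 * K - 7, by omega⟩
  have hb7 : b.Coprime 7 := by
    rw [Nat.coprime_comm, Nat.Prime.coprime_iff_not_dvd (by norm_num)]
    omega
  have hb12 : b.Coprime (12 * K) := hb ▸ Nat.coprime_self_add_right.2 hb7
  have hb4 : b.Coprime 4 := hb12.coprime_dvd_right ⟨3 * K, by ring⟩
  exact baseForm_represents_of_coprime (σ := 1) (w := 1) hK (by omega) (by ring)
    (hb12.mul_right (hb7.mul_right hb4)) (by norm_num)

theorem baseForm_represents_seven_mul {M : ℕ} (hM : M % 7 = 3 ∨ M % 7 = 5 ∨ M % 7 = 6) :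
    baseForm.Represents (7 * M) := by
  obtain ⟨w, hw, hMw⟩ : ∃ w : ℕ, w.Coprime 14 ∧ 12 * M * w ^ 2 % 7 = 1 := by
    rcases hM with hM | hM | hM
    · exact ⟨1, by norm_num, by omega⟩
    · exact ⟨3, by norm_num, by omega⟩
    · exact ⟨5, by norm_num, by omega⟩
  obtain ⟨b, hb⟩ : ∃ b, 12 * M * w ^ 2 = 7 * b + 1 := ⟨12 * M * w ^ 2 / 7, by omega⟩
  have hb12 : b.Coprime (12 * M) := by
    have : (7 * b).Coprime (12 * M * w ^ 2) := by simp [hb]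
    exact (this.coprime_mul_left).coprime_mul_right_right
  have hb4 : b.Coprime 4 := hb12.coprime_dvd_right ⟨3 * M, by ring⟩
  exact_mod_cast baseForm_represents_of_coprime (K := 7 * M) (σ := 7) (by omega)
    (by linarith) (by ring) (hb12.mul_right hb4) hw

/-- The form `3x² + 3y² + 5z² - 2yz - 2xz - xy`, half of `7(x² + y² + 2z²) - (x + y + 2z)²`. Up to
scaling, it is the dual of `baseForm` at the prime 7. -/
def dualForm : TernaryForm := ⟨3, 3, 5, -2, -2, -1⟩

theorem two_mul_eval_dualForm (v : Fin 3 → ℤ) :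
    2 * dualForm.eval v =
      7 * (v 0 ^ 2 + v 1 ^ 2 + 2 * v 2 ^ 2) - (v 0 + v 1 + 2 * v 2) ^ 2 := by
  simp only [eval, dualForm]
  ring

theorem dualForm_represents_seven_mul {n : ℤ} (h : baseForm.Represents n) :
    dualForm.Represents (7 * n) := by
  obtain ⟨v, rfl⟩ := h
  refine ⟨![v 0 + v 1 + 2 * v 2, -v 0 + v 1 + v 2, -v 1 + 2 * v 2], ?_⟩
  simp only [eval, baseForm, dualForm, cons_val_zero, cons_val_one, cons_val]
  ring

/-- The zeros of `baseForm` modulo 7 form the line spanned by `(-2, 1, 4)`. -/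
theorem dualForm_represents_of_seven_mul {n : ℤ} (h : baseForm.Represents (7 * n)) :
    dualForm.Represents n := by
  obtain ⟨v, hv⟩ := h
  simp only [eval, baseForm] at hv
  obtain ⟨hx, ⟨T, hT⟩⟩ := seven_dvd_and_dvd_of_dvd_sq_add_sq
    (x := 3 * (2 * v 0 + v 2)) (y := 4 * v 1 - v 2)
    ⟨8 * n + (2 * v 0 + v 2) ^ 2 - 3 * v 2 ^ 2, by linear_combination 8 * hv⟩
  obtain ⟨g, hg⟩ : 7 ∣ v 0 + 2 * v 1 := by omega
  refine ⟨![v 1 - 2 * T + g, v 1 - T - g, v 1 - 2 * T], ?_⟩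
  have hx_eq : v 0 = 7 * g - 2 * v 1 := by linarith
  have hz_eq : v 2 = 4 * v 1 - 7 * T := by linarith
  rw [hx_eq, hz_eq] at hv
  simp only [eval, dualForm, cons_val_zero, cons_val_one, cons_val]
  linarith

theorem dualForm_represents {A B n : ℤ} (hn0 : 0 ≤ n) (hn : 2 * n = 14 * A + 7 * B - B ^ 2)
    (hmod : ¬ (A % 7 = 0 ∧ B % 7 = 0)) : dualForm.Represents n := by
  by_cases hB : B % 7 = 0
  · obtain ⟨b, rfl⟩ := Int.dvd_of_emod_eq_zero hB
    obtain ⟨k, hk⟩ := Int.even_mul_pred_self b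
    obtain rfl : n = 7 * (A - 7 * k) := by linarith
    lift A - 7 * k to ℕ using by omega with K hK
    exact dualForm_represents_seven_mul
      (baseForm_represents_of_not_seven_dvd (by omega) (by omega))
  · have hn7 : n % 7 = 3 ∨ n % 7 = 5 ∨ n % 7 = 6 := by
      have hB_sq : B ^ 2 % 7 = 1 ∨ B ^ 2 % 7 = 2 ∨ B ^ 2 % 7 = 4 := by
        obtain h | h | h | h | h | h : B % 7 = 1 ∨ B % 7 = 2 ∨ B % 7 = 3 ∨ B % 7 = 4 ∨
          B % 7 = 5 ∨ B % 7 = 6 := by omega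
        all_goals simp [pow_two, Int.mul_emod, h]
      omega
    lift n to ℕ using hn0
    exact dualForm_represents_of_seven_mul (baseForm_represents_seven_mul (by omega))

theorem Represents.exists_sum_eq_and_sum_sq_eq {A B n : ℤ} (h : dualForm.Represents n)
    (hn : 2 * n = 14 * A + 7 * B - B ^ 2) :
    ∃ x₁ x₂ x₃ x₄ : ℤ, x₁ + x₂ + 2 * x₃ + 3 * x₄ = B ∧
      x₁ ^ 2 + x₂ ^ 2 + 2 * x₃ ^ 2 + 3 * x₄ ^ 2 = 2 * A + B := by
  obtain ⟨v, rfl⟩ := h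
  have hv := two_mul_eval_dualForm v
  have hdvd : 7 ∣ (B - (v 0 + v 1 + 2 * v 2)) * (B + (v 0 + v 1 + 2 * v 2)) :=
    ⟨2 * A + B - (v 0 ^ 2 + v 1 ^ 2 + 2 * v 2 ^ 2), by linear_combination hn - hv⟩
  rcases (by norm_num : Prime (7 : ℤ)).dvd_or_dvd hdvd with ⟨k, hk⟩ | ⟨k, hk⟩
  · exact ⟨k + v 0, k + v 1, k + v 2, k, by linarith, by
      obtain rfl : B = 7 * k + (v 0 + v 1 + 2 * v 2) := by linarith
      linarith⟩
  · exact ⟨k - v 0, k - v 1, k - v 2, k, by linarith, by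
      obtain rfl : B = 7 * k - (v 0 + v 1 + 2 * v 2) := by linarith
      linarith⟩

end TernaryForm

theorem two_mul_polygonal (m x : ℤ) : 2 * polygonal m x = (m - 2) * x ^ 2 - (m - 4) * x := by
  refine Int.mul_ediv_cancel' ?_
  obtain ⟨k, hk⟩ := Int.even_mul_pred_self x
  exact ⟨(m - 2) * k + x, by linear_combination (m - 2) * hk⟩

theorem sum_mul_polygonal {ι : Type*} (S : Finset ι) (c x : ι → ℤ) {A B : ℤ}
    (hsum : ∑ i ∈ S, c i * x i = B) (hsq : ∑ i ∈ S, c i * x i ^ 2 = 2 * A + B) (m : ℤ) :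
    ∑ i ∈ S, c i * polygonal m (x i) = A * (m - 2) + B := by
  have htwo : 2 * ∑ i ∈ S, c i * polygonal m (x i) =
      (m - 2) * ∑ i ∈ S, c i * x i ^ 2 - (m - 4) * ∑ i ∈ S, c i * x i := by
    simp only [Finset.mul_sum, ← Finset.sum_sub_distrib]
    refine Finset.sum_congr rfl fun i _ => ?_
    linear_combination c i * two_mul_polygonal m (x i)
  rw [hsum, hsq] at htwo
  linarith

theorem rep_1123_general {A B : ℤ} (hd : 0 ≤ 14 * A + 7 * B - B ^ 2)
    (hmod : ¬ (A % 7 = 0 ∧ B % 7 = 0)) :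
    ∃ x₁ x₂ x₃ x₄ : ℤ, ∀ m : ℤ,
      polygonal m x₁ + polygonal m x₂ + 2 * polygonal m x₃ + 3 * polygonal m x₄ =
        A * (m - 2) + B := by
  obtain ⟨k, hk⟩ := Int.even_mul_pred_self B
  have hn : 2 * (7 * A + 3 * B - k) = 14 * A + 7 * B - B ^ 2 := by linarith
  obtain ⟨x₁, x₂, x₃, x₄, hsum, hsq⟩ :=
    (TernaryForm.dualForm_represents (by linarith) hn hmod).exists_sum_eq_and_sum_sq_eq hn
  refine ⟨x₁, x₂, x₃, x₄, fun m => ?_⟩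
  simpa [Fin.sum_univ_four] using
    sum_mul_polygonal Finset.univ ![1, 1, 2, 3] ![x₁, x₂, x₃, x₄]
      (by simpa [Fin.sum_univ_four] using hsum) (by simpa [Fin.sum_univ_four] using hsq) m

theorem rep_1123 (m : ℤ) (hm : 3 ≤ m) (A B : ℤ) (hA : 0 ≤ A)
    (hd : 0 ≤ 14 * A + 7 * B - B ^ 2)
    (hmod : ¬ (A % 7 = 0 ∧ B % 7 = 0)) :
    ∃ x₁ x₂ x₃ x₄ : ℤ,
      polygonal m x₁ + polygonal m x₂ + 2 * polygonal m x₃ + 3 * polygonal m x₄ =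
        A * (m - 2) + B := by
  obtain ⟨x₁, x₂, x₃, x₄, h⟩ := rep_1123_general hd hmod
  exact ⟨x₁, x₂, x₃, x₄, h m⟩
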